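/- arXiv:2305.00154 — 6 statements merged into one kernel-verified Lean document; each statement's English description precedes it below -/
import Mathlib

section
/- Let Υ be a real symmetric positive definite N×N matrix, let A be an invertible real N×N matrix, and set Σ := A·Υ^{-1}·Aᵀ, with diagonal entries σ_1, …, σ_N (which are all positive). Then for every z ∈ ℝ^N, max_{1≤n≤N} |(A·Υ^{-1}·z)_n| / sqrt(σ_n) ≤ sqrt(N) · sqrt(zᵀ·Υ^{-1}·z). -/
open Matrix Finset

/-!
Write `aᵢ` for the `i`-th row of `A`, conjugated. In the semi-inner product `⟪x, y⟫ = xᴴ P y`, the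
`i`-th entry of `A P z` is `⟪aᵢ, z⟫` and the `i`-th diagonal entry of `A P Aᴴ` is `‖aᵢ‖²`, so the
bound is the Cauchy–Schwarz inequality.
-/

section PosSemidef

open RCLike
open scoped ComplexOrder

variable {𝕜 m n : Type*} [RCLike 𝕜] [Fintype n] {P : Matrix n n 𝕜}

theorem norm_star_dotProduct_mulVec_le (hP : P.PosSemidef) (x y : n → 𝕜) :
    ‖star x ⬝ᵥ (P *ᵥ y)‖ ≤ √(re (star x ⬝ᵥ (P *ᵥ x))) * √(re (star y ⬝ᵥ (P *ᵥ y))) := by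
  let := P.toSeminormedAddCommGroup hP
  let := P.toInnerProductSpace hP
  have inner_eq (u v : n → 𝕜) : inner 𝕜 u v = star u ⬝ᵥ (P *ᵥ v) := dotProduct_comm _ _
  simpa only [norm_eq_sqrt_re_inner (𝕜 := 𝕜), inner_eq] using norm_inner_le_norm (𝕜 := 𝕜) x y

theorem norm_mul_mulVec_apply_le (hP : P.PosSemidef) (A : Matrix m n 𝕜) (z : n → 𝕜) (i : m) :
    ‖((A * P) *ᵥ z) i‖ ≤ √(re ((A * P * Aᴴ) i i)) * √(re (star z ⬝ᵥ (P *ᵥ z))) := by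
  have entry_eq : ((A * P) *ᵥ z) i = A i ⬝ᵥ (P *ᵥ z) := congrFun (mulVec_mulVec z A P).symm i
  have diag_eq : (A * P * Aᴴ) i i = A i ⬝ᵥ (P *ᵥ star (A i)) := by
    rw [Matrix.mul_assoc]
    rfl
  simpa only [entry_eq, diag_eq, star_star] using norm_star_dotProduct_mulVec_le hP (star (A i)) z

theorem DUCB_key_inequality_general (hP : P.PosSemidef) (A : Matrix m n 𝕜) (z : n → 𝕜) (i : m)
    (hσ : 0 < re ((A * P * Aᴴ) i i)) :
    ‖((A * P) *ᵥ z) i‖ / √(re ((A * P * Aᴴ) i i)) ≤ √(re (star z ⬝ᵥ (P *ᵥ z))) :=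
  (div_le_iff₀' (Real.sqrt_pos.2 hσ)).2 (norm_mul_mulVec_apply_le hP A z i)

end PosSemidef

/-- The deterministic core inequality ('keyIneq') of Propositions 1 and 2:
with `Σ := A Υ⁻¹ Aᵀ`, one has `‖A Υ⁻¹ z‖_{D_Σ^{-1/2},∞} ≤ √N · ‖z‖_{Υ⁻¹}`. -/
theorem DUCB_key_inequality (N : ℕ) (hN : 1 ≤ N) (Υ A : Matrix (Fin N) (Fin N) ℝ)
    (hΥ : Υ.PosDef) (hA : IsUnit A) (z : Fin N → ℝ) :
    Finset.univ.sup' (Finset.univ_nonempty_iff.mpr (Fin.pos_iff_nonempty.mp hN))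
      (fun n => |((A * Υ⁻¹) *ᵥ z) n| / Real.sqrt ((A * Υ⁻¹ * Aᵀ) n n))
    ≤ Real.sqrt N * Real.sqrt (z ⬝ᵥ (Υ⁻¹ *ᵥ z)) := by
  have hσ (n : Fin N) : 0 < (A * Υ⁻¹ * Aᵀ) n n :=
    (hΥ.inv.mul_mul_conjTranspose_same (vecMul_injective_of_isUnit hA)).diag_pos
  have one_le_sqrt_N : 1 ≤ √(N : ℝ) := Real.one_le_sqrt.2 (Nat.one_le_cast.2 hN)
  exact sup'_le _ _ fun n _ =>
    (DUCB_key_inequality_general hΥ.inv.posSemidef A z n (hσ n)).trans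
      (le_mul_of_one_le_left (Real.sqrt_nonneg _) one_le_sqrt_N)
end

section
/- Fix N ≥ 1. Let A_1, A_2, … be invertible real N×N matrices, Σ_0 a symmetric positive definite N×N matrix, φ̂_0 ∈ ℝ^N, and for each k ≥ 0 let Y_k be a symmetric positive semidefinite N×N matrix, y_k ∈ ℝ^N, λ_k ≥ 0, and let (ω_k)_{k≥-1} be a nondecreasing real sequence with ω_{-1} = 0. Define Γ_0 = I and Γ_{k+1} = A_{k+1} Γ_k A_{k+1}ᵀ, and generate (Σ_k, φ̂_k) by the discounted Kalman filter recursions: Σ_{k+1/2} = (Σ_k^{-1} + λ_k Y_k)^{-1}; φ̂_{k+1/2} = φ̂_k + λ_k Σ_{k+1/2}(y_k − Y_k φ̂_k); Σ_{k+1} = A_{k+1}(Σ_{k+1/2}^{-1} + (ω_k − ω_{k-1})Γ_k^{-1})^{-1}A_{k+1}ᵀ; φ̂_{k+1} = Σ_{k+1} A_{k+1}^{-ᵀ} Σ_{k+1/2}^{-1} φ̂_{k+1/2}. Then for every k ≥ 0: Σ_k = A[k:1] Υ_k^{-1} A[k:1]ᵀ and φ̂_k = A[k:1] Υ_k^{-1}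 ( Σ_0^{-1} φ̂_0 + Σ_{t=0}^{k-1} λ_t A[t:1]ᵀ y_t ), where Υ_k := Σ_0^{-1} + Σ_{t=0}^{k-1} λ_t A[t:1]ᵀ Y_t A[t:1] + ω_{k-1}·I. -/
open Matrix Finset

/-!
In information coordinates the filter is additive. Pulled back to time `0` along `P = A[k:1]`, the
precision matrix `S⁻¹` and the information vector `S⁻¹ φ` become `Pᵀ S⁻¹ P` and `Pᵀ S⁻¹ φ`. The
measurement update adds `λ Pᵀ Y P` and `λ Pᵀ y` to them. The discount adds a multiple of
`Pᵀ Γ⁻¹ P`, which is `1` because `Γ = P Pᵀ`, and the propagation by `A` is absorbed into `P`.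
Hence both quantities telescope, and undoing the change of coordinates gives `S` and `φ`.
-/

theorem isUnit_of_succ_eq_mul {M : Type*} [Monoid M] {a p : ℕ → M} (ha : ∀ k, IsUnit (a (k + 1)))
    (hp0 : p 0 = 1) (hp : ∀ k, p (k + 1) = a (k + 1) * p k) (k : ℕ) : IsUnit (p k) := by
  induction k with
  | zero => exact hp0 ▸ isUnit_one
  | succ k ih => exact hp k ▸ (ha k).mul ih

section CommSemiring

variable {n R : Type*} [Fintype n] [CommSemiring R]

/-- The vector to which `Υ_k⁻¹` is applied in the closed form of the state estimate: the prior
information vector `v` together with the pulled back measurements. -/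
def informationVector (v : n → R) (P : ℕ → Matrix n n R) (y : ℕ → n → R) (lam : ℕ → R) (k : ℕ) :
    n → R :=
  v + ∑ t ∈ range k, lam t • ((P t)ᵀ *ᵥ y t)

variable [DecidableEq n]

/-- The matrix `Υ_k`: the precision of the state at time `k`, pulled back to time `0`. It starts
from the prior precision `L`, and `ω k` is the paper's `ω_{k-1}`. -/
def informationMatrix (L : Matrix n n R) (P Y : ℕ → Matrix n n R) (lam ω : ℕ → R) (k : ℕ) :
    Matrix n n R :=
  L + (∑ t ∈ range k, lam t • ((P t)ᵀ * Y t * P t)) + ω k • (1 : Matrix n n R)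

theorem eq_stateTransition_mul_transpose {A Γ P : ℕ → Matrix n n R} (hΓ0 : Γ 0 = 1)
    (hΓ : ∀ k, Γ (k + 1) = A (k + 1) * Γ k * (A (k + 1))ᵀ) (hP0 : P 0 = 1)
    (hP : ∀ k, P (k + 1) = A (k + 1) * P k) (k : ℕ) : Γ k = P k * (P k)ᵀ := by
  induction k with
  | zero => simp [hΓ0, hP0]
  | succ k ih => simp only [hΓ, hP, ih, transpose_mul, mul_assoc]

end CommSemiring

section CommRing

variable {n R : Type*} [Fintype n] [DecidableEq n] [CommRing R]

theorem mul_inv_mul_inv_mul_mul_cancel {B M C : Matrix n n R} (h : IsUnit (B * M⁻¹ * C)) :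
    C * (B * M⁻¹ * C)⁻¹ * B = M := by
  obtain ⟨⟨hB, hM⟩, hC⟩ : (IsUnit B ∧ IsUnit M⁻¹) ∧ IsUnit C := by
    simpa only [IsUnit.mul_iff] using h
  rw [isUnit_nonsing_inv_iff] at hM
  rw [isUnit_iff_isUnit_det] at hB hM hC
  rw [Matrix.mul_inv_rev, Matrix.mul_inv_rev, nonsing_inv_nonsing_inv M hM,
    mul_nonsing_inv_cancel_left _ _ hC, nonsing_inv_mul_cancel_right _ _ hB]

theorem transpose_mul_inv_mul_predict {A M : Matrix n n R} (P : Matrix n n R)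
    (h : IsUnit (A * M⁻¹ * Aᵀ)) :
    (A * P)ᵀ * (A * M⁻¹ * Aᵀ)⁻¹ * (A * P) = Pᵀ * M * P := by
  calc (A * P)ᵀ * (A * M⁻¹ * Aᵀ)⁻¹ * (A * P)
      = Pᵀ * (Aᵀ * (A * M⁻¹ * Aᵀ)⁻¹ * A) * P := by simp only [transpose_mul, mul_assoc]
    _ = Pᵀ * M * P := by rw [mul_inv_mul_inv_mul_mul_cancel h]

theorem transpose_mulVec_inv_mulVec_predict {A S : Matrix n n R} (P : Matrix n n R)
    (hA : IsUnit A) (hS : IsUnit S) (v : n → R) :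
    (A * P)ᵀ *ᵥ (S⁻¹ *ᵥ (S *ᵥ (A⁻¹ᵀ *ᵥ v))) = Pᵀ *ᵥ v := by
  rw [isUnit_iff_isUnit_det] at hA hS
  have hAP : (A * P)ᵀ * A⁻¹ᵀ = Pᵀ := by
    rw [← transpose_mul, nonsing_inv_mul_cancel_left _ _ hA]
  rw [mulVec_mulVec _ S⁻¹ S, nonsing_inv_mul S hS, one_mulVec, mulVec_mulVec, hAP]

theorem inv_mulVec_measurement_update {L Y H : Matrix n n R} {c : R} (hH : IsUnit H)
    (hHinv : H⁻¹ = L + c • Y) (x y : n → R) :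
    H⁻¹ *ᵥ (x + c • (H *ᵥ (y - Y *ᵥ x))) = L *ᵥ x + c • y := by
  rw [isUnit_iff_isUnit_det] at hH
  calc H⁻¹ *ᵥ (x + c • (H *ᵥ (y - Y *ᵥ x)))
      = H⁻¹ *ᵥ x + c • (y - Y *ᵥ x) := by
        rw [mulVec_add, mulVec_smul, mulVec_mulVec, nonsing_inv_mul H hH, one_mulVec]
    _ = L *ᵥ x + c • y := by
        rw [hHinv, add_mulVec, smul_mulVec, smul_sub]
        abel

theorem eq_mul_inv_mul_and_eq_mulVec_of_information {P Q S U : Matrix n n R} {x b : n → R}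
    (hP : IsUnit P) (hQ : IsUnit Q) (hS : IsUnit S) (hU : Q * S⁻¹ * P = U)
    (hb : Q *ᵥ (S⁻¹ *ᵥ x) = b) :
    S = P * U⁻¹ * Q ∧ x = (P * U⁻¹) *ᵥ b := by
  have hSU : P * U⁻¹ * Q = S := by
    rw [← hU, mul_inv_mul_inv_mul_mul_cancel ((hQ.mul (isUnit_nonsing_inv_iff.2 hS)).mul hP)]
  refine ⟨hSU.symm, ?_⟩
  rw [← hb, mulVec_mulVec, hSU, mulVec_mulVec,
    mul_nonsing_inv S ((isUnit_iff_isUnit_det S).1 hS), one_mulVec]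

theorem transpose_mul_inv_mul_eq_informationMatrix {A Γ P S Y : ℕ → Matrix n n R}
    {lam ω : ℕ → R} (hω0 : ω 0 = 0) (hP0 : P 0 = 1)
    (hP : ∀ k, P (k + 1) = A (k + 1) * P k) (hΓ : ∀ k, (P k)ᵀ * (Γ k)⁻¹ * P k = 1)
    (hS : ∀ k, IsUnit (S (k + 1)))
    (hSrec : ∀ k, S (k + 1) = A (k + 1) *
      ((S k)⁻¹ + lam k • Y k + (ω (k + 1) - ω k) • (Γ k)⁻¹)⁻¹ * (A (k + 1))ᵀ) (k : ℕ) :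
    (P k)ᵀ * (S k)⁻¹ * P k = informationMatrix (S 0)⁻¹ P Y lam ω k := by
  induction k with
  | zero => simp [informationMatrix, hP0, hω0]
  | succ k ih =>
    calc (P (k + 1))ᵀ * (S (k + 1))⁻¹ * P (k + 1)
        = (P k)ᵀ * ((S k)⁻¹ + lam k • Y k + (ω (k + 1) - ω k) • (Γ k)⁻¹) * P k := by
          rw [hP, hSrec, transpose_mul_inv_mul_predict _ (hSrec k ▸ hS k)]
      _ = (P k)ᵀ * (S k)⁻¹ * P k + lam k • ((P k)ᵀ * Y k * P k)
            + (ω (k + 1) - ω k) • ((P k)ᵀ * (Γ k)⁻¹ * P k) := by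
          simp only [mul_add, add_mul, Matrix.mul_smul, Matrix.smul_mul]
      _ = informationMatrix (S 0)⁻¹ P Y lam ω (k + 1) := by
          rw [ih, hΓ, informationMatrix, informationMatrix, sum_range_succ, sub_smul]
          abel

theorem transpose_mulVec_inv_mulVec_eq_informationVector {A P S : ℕ → Matrix n n R}
    {φ y : ℕ → n → R} {lam : ℕ → R} (hA : ∀ k, IsUnit (A (k + 1)))
    (hP0 : P 0 = 1) (hP : ∀ k, P (k + 1) = A (k + 1) * P k) (hS : ∀ k, IsUnit (S (k + 1)))
    (hφ : ∀ k, φ (k + 1) =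
      S (k + 1) *ᵥ ((A (k + 1))⁻¹ᵀ *ᵥ ((S k)⁻¹ *ᵥ φ k + lam k • y k))) (k : ℕ) :
    (P k)ᵀ *ᵥ ((S k)⁻¹ *ᵥ φ k) = informationVector ((S 0)⁻¹ *ᵥ φ 0) P y lam k := by
  induction k with
  | zero => simp [informationVector, hP0]
  | succ k ih =>
    rw [hφ, hP, transpose_mulVec_inv_mulVec_predict _ (hA k) (hS k), mulVec_add, mulVec_smul, ih,
      informationVector, informationVector, sum_range_succ, add_assoc]

theorem discountedKalman_closed_form_general {A Γ P S Shalf Y : ℕ → Matrix n n R}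
    {φ φhalf y : ℕ → n → R} {lam ω : ℕ → R} (hω0 : ω 0 = 0) (hΓ0 : Γ 0 = 1)
    (hΓ : ∀ k, Γ (k + 1) = A (k + 1) * Γ k * (A (k + 1))ᵀ)
    (hP0 : P 0 = 1) (hP : ∀ k, P (k + 1) = A (k + 1) * P k)
    (hS : ∀ k, IsUnit (S k)) (hH : ∀ k, IsUnit (Shalf k))
    (hShalf : ∀ k, Shalf k = ((S k)⁻¹ + lam k • Y k)⁻¹)
    (hφhalf : ∀ k, φhalf k = φ k + lam k • (Shalf k *ᵥ (y k - Y k *ᵥ φ k)))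
    (hSrec : ∀ k, S (k + 1)
      = A (k + 1) * ((Shalf k)⁻¹ + (ω (k + 1) - ω k) • (Γ k)⁻¹)⁻¹ * (A (k + 1))ᵀ)
    (hφrec : ∀ k, φ (k + 1) = S (k + 1) *ᵥ ((A (k + 1))⁻¹ᵀ *ᵥ ((Shalf k)⁻¹ *ᵥ φhalf k)))
    (k : ℕ) :
    S k = P k * (informationMatrix (S 0)⁻¹ P Y lam ω k)⁻¹ * (P k)ᵀ
      ∧ φ k = (P k * (informationMatrix (S 0)⁻¹ P Y lam ω k)⁻¹)
          *ᵥ informationVector ((S 0)⁻¹ *ᵥ φ 0) P y lam k := by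
  have hA (k) : IsUnit (A (k + 1)) := by
    have h := hS (k + 1)
    rw [hSrec, IsUnit.mul_iff, IsUnit.mul_iff] at h
    exact h.1.1
  have hPu := isUnit_of_succ_eq_mul hA hP0 hP
  have hPT (k) : IsUnit (P k)ᵀ := (isUnit_transpose _).2 (hPu k)
  have hΓP (k) : (P k)ᵀ * (Γ k)⁻¹ * P k = 1 := by
    simpa [eq_stateTransition_mul_transpose hΓ0 hΓ hP0 hP k] using
      mul_inv_mul_inv_mul_mul_cancel (M := 1) (((hPu k).mul (by simp)).mul (hPT k))
  have hHinv (k) : (Shalf k)⁻¹ = (S k)⁻¹ + lam k • Y k := by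
    have h := hH k
    rw [hShalf, isUnit_nonsing_inv_iff, isUnit_iff_isUnit_det] at h
    rw [hShalf, nonsing_inv_nonsing_inv _ h]
  have hupdate (k) : (Shalf k)⁻¹ *ᵥ φhalf k = (S k)⁻¹ *ᵥ φ k + lam k • y k := by
    rw [hφhalf, inv_mulVec_measurement_update (hH k) (hHinv k)]
  simp only [hHinv] at hSrec
  simp only [hupdate] at hφrec
  exact eq_mul_inv_mul_and_eq_mulVec_of_information (hPu k) (hPT k) (hS k)
    (transpose_mul_inv_mul_eq_informationMatrix hω0 hP0 hP hΓP (fun k => hS (k + 1)) hSrec k)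
    (transpose_mulVec_inv_mulVec_eq_informationVector hA hP0 hP (fun k => hS (k + 1)) hφrec k)

end CommRing

section Real

variable {n : Type*} [Fintype n]

theorem posSemidef_of_congruence_rec {A Γ : ℕ → Matrix n n ℝ} (hΓ0 : (Γ 0).PosSemidef)
    (hΓ : ∀ k, Γ (k + 1) = A (k + 1) * Γ k * (A (k + 1))ᵀ) (k : ℕ) : (Γ k).PosSemidef := by
  induction k with
  | zero => exact hΓ0
  | succ k ih => exact hΓ k ▸ ih.mul_mul_conjTranspose_same (A (k + 1))

variable [DecidableEq n]

theorem posDef_inv_inv_add_smul {S Y : Matrix n n ℝ} {c : ℝ} (hS : S.PosDef)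
    (hY : Y.PosSemidef) (hc : 0 ≤ c) : (S⁻¹ + c • Y)⁻¹.PosDef :=
  (hS.inv.add_posSemidef (hY.smul hc)).inv

theorem posDef_predict {A H Γ : Matrix n n ℝ} {c : ℝ} (hA : IsUnit A) (hH : H.PosDef)
    (hΓ : Γ.PosSemidef) (hc : 0 ≤ c) : (A * (H⁻¹ + c • Γ⁻¹)⁻¹ * Aᵀ).PosDef :=
  (posDef_inv_inv_add_smul hH hΓ.inv hc).mul_mul_conjTranspose_same
    (vecMul_injective_iff_isUnit.2 hA)

theorem posDef_filter_covariance {A Γ S Shalf Y : ℕ → Matrix n n ℝ} {lam ω : ℕ → ℝ}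
    (hA : ∀ k, IsUnit (A (k + 1))) (hS0 : (S 0).PosDef) (hY : ∀ k, (Y k).PosSemidef)
    (hlam : ∀ k, 0 ≤ lam k) (hω : Monotone ω) (hΓ : ∀ k, (Γ k).PosSemidef)
    (hShalf : ∀ k, Shalf k = ((S k)⁻¹ + lam k • Y k)⁻¹)
    (hSrec : ∀ k, S (k + 1)
      = A (k + 1) * ((Shalf k)⁻¹ + (ω (k + 1) - ω k) • (Γ k)⁻¹)⁻¹ * (A (k + 1))ᵀ) (k : ℕ) :
    (S k).PosDef ∧ (Shalf k).PosDef := by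
  have hhalf {k} (h : (S k).PosDef) : (Shalf k).PosDef :=
    hShalf k ▸ posDef_inv_inv_add_smul h (hY k) (hlam k)
  suffices hS : (S k).PosDef from ⟨hS, hhalf hS⟩
  induction k with
  | zero => exact hS0
  | succ k ih =>
    exact hSrec k ▸ posDef_predict (hA k) (hhalf ih) (hΓ k) (sub_nonneg.2 (hω k.le_succ))

end Real

/-- Lemma 1 (estRecursion): closed form of the discounted Kalman filter.
Here `P k` denotes the state propagation matrix `A[k:1] = A_k ⋯ A_1` (with `P 0 = I`),
`Γ` is the auxiliary matrix, and the sequence `ω` is index-shifted so that `ω k`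
stands for the paper's `ω_{k-1}` (hence `ω 0 = 0` encodes `ω_{-1} = 0` and the
recursion uses `ω (k+1) - ω k = ω_k - ω_{k-1}`). -/
theorem discountedKalman_closed_form (N : ℕ) (hN : 1 ≤ N)
    (A Γ P : ℕ → Matrix (Fin N) (Fin N) ℝ)
    (S Shalf Y : ℕ → Matrix (Fin N) (Fin N) ℝ)
    (φ φhalf y : ℕ → Fin N → ℝ)
    (lam ω : ℕ → ℝ)
    (hA : ∀ k, IsUnit (A k))
    (hS0 : (S 0).PosDef)
    (hY : ∀ k, (Y k).PosSemidef)
    (hlam : ∀ k, 0 ≤ lam k)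
    (hω0 : ω 0 = 0)
    (hωmono : Monotone ω)
    (hΓ0 : Γ 0 = 1)
    (hΓ : ∀ k, Γ (k + 1) = A (k + 1) * Γ k * (A (k + 1))ᵀ)
    (hP0 : P 0 = 1)
    (hP : ∀ k, P (k + 1) = A (k + 1) * P k)
    (hShalf : ∀ k, Shalf k = ((S k)⁻¹ + lam k • Y k)⁻¹)
    (hφhalf : ∀ k, φhalf k = φ k + lam k • ((Shalf k) *ᵥ (y k - (Y k) *ᵥ φ k)))
    (hSrec : ∀ k, S (k + 1)
      = A (k + 1) * ((Shalf k)⁻¹ + (ω (k + 1) - ω k) • (Γ k)⁻¹)⁻¹ * (A (k + 1))ᵀ)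
    (hφrec : ∀ k, φ (k + 1)
      = (S (k + 1)) *ᵥ (((A (k + 1))⁻¹)ᵀ *ᵥ ((Shalf k)⁻¹ *ᵥ φhalf k))) :
    ∀ k,
      S k = P k * ((S 0)⁻¹ + (∑ t ∈ Finset.range k, lam t • ((P t)ᵀ * Y t * P t))
              + ω k • (1 : Matrix (Fin N) (Fin N) ℝ))⁻¹ * (P k)ᵀ
      ∧ φ k = (P k * ((S 0)⁻¹ + (∑ t ∈ Finset.range k, lam t • ((P t)ᵀ * Y t * P t))
              + ω k • (1 : Matrix (Fin N) (Fin N) ℝ))⁻¹)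
          *ᵥ ((S 0)⁻¹ *ᵥ φ 0 + ∑ t ∈ Finset.range k, lam t • ((P t)ᵀ *ᵥ y t)) := by
  have hΓpos := posSemidef_of_congruence_rec (hΓ0 ▸ PosSemidef.one) hΓ
  have hpos := posDef_filter_covariance (fun k => hA (k + 1)) hS0 hY hlam hωmono hΓpos hShalf hSrec
  exact discountedKalman_closed_form_general hω0 hΓ0 hΓ hP0 hP (fun k => (hpos k).1.isUnit)
    (fun k => (hpos k).2.isUnit) hShalf hφhalf hSrec hφrec
end

section
/- Fix k ≥ 1. Let Υ_0, Υ_1, …, Υ_k be real symmetric positive definite N×N matrices with Υ_t ⪯ Υ_k for every 0 ≤ t ≤ k−1, let A_1, …, A_{k−1} be invertible real N×N matrices, and set Σ_t := A[t:1] Υ_t^{-1} A[t:1]ᵀ. Let Y_0, …, Y_{k−1} be symmetric N×N matrices, δ_0, …, δ_{k−1} ∈ ℝ^N, λ_0, …, λ_{k−1} ≥ 0, and let λ̄, B > 0 be such that λ_t · ‖Y_t‖_{Σ_t} ≤ λ̄ for all t (where ‖Y‖_Σ denotes the square root of the largest eigenvalue of Y Σ Y) and Σ_{t=0}^{k−1}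 ‖δ_t‖ ≤ B. Then ‖ Σ_{t=0}^{k−1} λ_t A[t:1]ᵀ Y_t δ_t ‖_{Υ_k^{-1}} ≤ λ̄·B. -/
open Matrix Finset

/-- The largest eigenvalue of a real square matrix, as the supremum of its spectrum. -/
noncomputable def lambdaMax {N : ℕ} (S : Matrix (Fin N) (Fin N) ℝ) : ℝ :=
  sSup (spectrum ℝ S)

/-!
After the triangle inequality, each summand is estimated in its own metric: inversion reverses the
Loewner order, so `Υ t ⪯ Υ k` allows `(Υ k)⁻¹` to be replaced by `(Υ t)⁻¹`. There
`‖P_tᵀ Y_t δ_t‖²` is the quadratic form of `Y_t Σ_t Y_t` at `δ_t`, which the Rayleigh bound compares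
with `‖Y_t‖²_{Σ_t} ‖δ_t‖²`.
-/

theorem posSemidef_inv_sub_inv {n 𝕜 : Type*} [Fintype n] [DecidableEq n] [Field 𝕜]
    [PartialOrder 𝕜] [StarRing 𝕜] [StarOrderedRing 𝕜] {Q R : Matrix n n 𝕜} (hQ : Q.PosDef)
    (hQR : (R - Q).PosSemidef) : (Q⁻¹ - R⁻¹).PosSemidef := by
  have hR : R.PosDef := by simpa using hQ.add_posSemidef hQR
  have := hQ.isUnit.invertible
  have := hR.isUnit.invertible
  -- Both differences are Schur complements of the block matrix `[Q⁻¹, 1; 1, R]`.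
  have hBlock : (fromBlocks Q⁻¹ 1 1ᴴ R).PosSemidef :=
    (PosDef.fromBlocks₁₁ 1 R hQ.inv).2 (by simpa only [conjTranspose_one, one_mul, mul_one,
      inv_inv_of_invertible] using hQR)
  simpa using (PosDef.fromBlocks₂₂ Q⁻¹ 1 hR).1 hBlock

theorem posSemidef_lambdaMax_smul_one_sub {N : ℕ} {S : Matrix (Fin N) (Fin N) ℝ}
    (hS : S.IsHermitian) : (lambdaMax S • 1 - S).PosSemidef := by
  refine posSemidef_iff_isHermitian_and_spectrum_nonneg.2
    ⟨(isHermitian_one.smul (IsSelfAdjoint.all _)).sub hS, ?_⟩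
  rw [← Algebra.algebraMap_eq_smul_one, ← spectrum.singleton_sub_eq]
  rintro _ ⟨_, rfl, μ, hμ, rfl⟩
  exact sub_nonneg.2 (le_csSup S.finite_real_spectrum.bddAbove hμ)

theorem dotProduct_mulVec_le_lambdaMax_mul {N : ℕ} {S : Matrix (Fin N) (Fin N) ℝ}
    (hS : S.IsHermitian) (x : Fin N → ℝ) : x ⬝ᵥ (S *ᵥ x) ≤ lambdaMax S * (x ⬝ᵥ x) := by
  simpa [sub_mulVec, smul_mulVec, dotProduct_sub] using
    (posSemidef_lambdaMax_smul_one_sub hS).dotProduct_mulVec_nonneg x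

section WeightedNorm

variable {ι m n : Type*} [Fintype m] [Fintype n]

/-- The weighted length `‖x‖_Q = √(xᵀ Q x)` of a vector, a seminorm in `x` when `Q` is positive
semidefinite. For other `Q` the value is `0` wherever the quadratic form is negative. -/
noncomputable def weightedNorm (Q : Matrix n n ℝ) (x : n → ℝ) : ℝ :=
  √(x ⬝ᵥ (Q *ᵥ x))

theorem weightedNorm_smul (Q : Matrix n n ℝ) (c : ℝ) (x : n → ℝ) :
    weightedNorm Q (c • x) = |c| * weightedNorm Q x := by
  rw [weightedNorm, mulVec_smul, smul_dotProduct, dotProduct_smul, smul_eq_mul, smul_eq_mul,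
    ← mul_assoc, Real.sqrt_mul (mul_self_nonneg c), Real.sqrt_mul_self_eq_abs, weightedNorm]

theorem weightedNorm_sum_le {Q : Matrix n n ℝ} (hQ : Q.PosSemidef) (s : Finset ι)
    (f : ι → n → ℝ) : weightedNorm Q (∑ t ∈ s, f t) ≤ ∑ t ∈ s, weightedNorm Q (f t) := by
  have hnorm : weightedNorm Q = (Q.toSeminormedAddCommGroup hQ).norm :=
    funext fun x ↦ congrArg Real.sqrt (dotProduct_comm x (Q *ᵥ x))
  rw [hnorm]
  -- The instance is explicit because `n → ℝ` already carries the sup norm.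
  exact @norm_sum_le _ _ (Q.toSeminormedAddCommGroup hQ) s f

theorem weightedNorm_mono_left {Q R : Matrix n n ℝ} (hQR : (R - Q).PosSemidef) (x : n → ℝ) :
    weightedNorm Q x ≤ weightedNorm R x :=
  Real.sqrt_le_sqrt <| by
    simpa [sub_mulVec, dotProduct_sub] using hQR.dotProduct_mulVec_nonneg x

theorem weightedNorm_mulVec (Q : Matrix n n ℝ) (C : Matrix n m ℝ) (x : m → ℝ) :
    weightedNorm Q (C *ᵥ x) = weightedNorm (Cᵀ * Q * C) x := by
  simp only [weightedNorm, ← mulVec_mulVec, dotProduct_mulVec x, vecMul_transpose]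

theorem weightedNorm_le_sqrt_lambdaMax_mul {N : ℕ} {S : Matrix (Fin N) (Fin N) ℝ}
    (hS : S.IsHermitian) (x : Fin N → ℝ) :
    weightedNorm S x ≤ √(lambdaMax S) * √(x ⬝ᵥ x) := by
  have hx : 0 ≤ x ⬝ᵥ x := sum_nonneg fun i _ ↦ mul_self_nonneg (x i)
  rw [← Real.sqrt_mul' _ hx]
  exact Real.sqrt_le_sqrt (dotProduct_mulVec_le_lambdaMax_mul hS x)

theorem weightedNorm_transpose_mulVec_mulVec_le {N : ℕ} {Q : Matrix n n ℝ} (hQ : Q.IsHermitian)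
    (P : Matrix m n ℝ) (Y : Matrix m (Fin N) ℝ) (x : Fin N → ℝ) :
    weightedNorm Q (Pᵀ *ᵥ (Y *ᵥ x)) ≤ √(lambdaMax (Yᵀ * (P * Q * Pᵀ) * Y)) * √(x ⬝ᵥ x) := by
  have hS : (Yᵀ * (P * Q * Pᵀ) * Y).IsHermitian :=
    isHermitian_conjTranspose_mul_mul Y (isHermitian_mul_mul_conjTranspose P hQ)
  simpa only [weightedNorm_mulVec, transpose_transpose] using
    weightedNorm_le_sqrt_lambdaMax_mul hS x

end WeightedNorm

theorem disturbance_term_bound_general {ι m n : Type*} [Fintype m] [Fintype n] [DecidableEq n]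
    {N : ℕ} (s : Finset ι) {R : Matrix n n ℝ} (hR : R.PosDef) {Υ : ι → Matrix n n ℝ}
    (hΥ : ∀ t ∈ s, (Υ t).PosDef) (hΥR : ∀ t ∈ s, (R - Υ t).PosSemidef)
    (P : ι → Matrix m n ℝ) (Y : ι → Matrix m (Fin N) ℝ) (δ : ι → Fin N → ℝ)
    {lam : ι → ℝ} (hlam : ∀ t ∈ s, 0 ≤ lam t) {lamBar : ℝ}
    (hY : ∀ t ∈ s,
      lam t * √(lambdaMax ((Y t)ᵀ * (P t * (Υ t)⁻¹ * (P t)ᵀ) * Y t)) ≤ lamBar) :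
    weightedNorm R⁻¹ (∑ t ∈ s, lam t • ((P t)ᵀ *ᵥ (Y t *ᵥ δ t))) ≤
      lamBar * ∑ t ∈ s, √(δ t ⬝ᵥ δ t) := by
  rw [mul_sum]
  refine (weightedNorm_sum_le hR.inv.posSemidef _ _).trans (sum_le_sum fun t ht ↦ ?_)
  have hlam_nonneg := hlam t ht
  calc weightedNorm R⁻¹ (lam t • ((P t)ᵀ *ᵥ (Y t *ᵥ δ t)))
      = lam t * weightedNorm R⁻¹ ((P t)ᵀ *ᵥ (Y t *ᵥ δ t)) := by
        rw [weightedNorm_smul, abs_of_nonneg hlam_nonneg]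
    _ ≤ lam t * weightedNorm (Υ t)⁻¹ ((P t)ᵀ *ᵥ (Y t *ᵥ δ t)) := by
        gcongr
        exact weightedNorm_mono_left (posSemidef_inv_sub_inv (hΥ t ht) (hΥR t ht)) _
    _ ≤ lam t * (√(lambdaMax ((Y t)ᵀ * (P t * (Υ t)⁻¹ * (P t)ᵀ) * Y t)) *
          √(δ t ⬝ᵥ δ t)) := by
        gcongr
        exact weightedNorm_transpose_mulVec_mulVec_le (hΥ t ht).inv.isHermitian _ _ _
    _ ≤ lamBar * √(δ t ⬝ᵥ δ t) := by
        rw [← mul_assoc]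
        gcongr
        exact hY t ht

/-- Lemma 4 (upperBoundII): the disturbance term of the D-UCB bound is at most `λ̄·B`.
Here `P t` is the propagation matrix `A[t:1]` (with `P 0 = I`), `Σ_t = P t (Υ t)⁻¹ (P t)ᵀ`,
and `‖Y‖_Σ = √(λ_max (Y Σ Y))`. -/
theorem disturbance_term_bound (N k : ℕ) (hk : 1 ≤ k)
    (Υ : ℕ → Matrix (Fin N) (Fin N) ℝ) (hΥ : ∀ t ≤ k, (Υ t).PosDef)
    (hΥle : ∀ t < k, (Υ k - Υ t).PosSemidef)
    (A P : ℕ → Matrix (Fin N) (Fin N) ℝ)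
    (hA : ∀ t, 1 ≤ t → t < k → IsUnit (A t))
    (hP0 : P 0 = 1) (hP : ∀ t, P (t + 1) = A (t + 1) * P t)
    (Y : ℕ → Matrix (Fin N) (Fin N) ℝ) (hY : ∀ t < k, (Y t).IsHermitian)
    (δ : ℕ → Fin N → ℝ) (lam : ℕ → ℝ) (hlam : ∀ t < k, 0 ≤ lam t)
    (lamBar B : ℝ) (hlamBar : 0 < lamBar) (hB : 0 < B)
    (hYn : ∀ t < k, lam t * Real.sqrt (lambdaMax
        (Y t * (P t * (Υ t)⁻¹ * (P t)ᵀ) * Y t)) ≤ lamBar)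
    (hδ : ∑ t ∈ Finset.range k, Real.sqrt (δ t ⬝ᵥ δ t) ≤ B) :
    Real.sqrt ((∑ t ∈ Finset.range k, lam t • ((P t)ᵀ *ᵥ (Y t *ᵥ δ t)))
        ⬝ᵥ ((Υ k)⁻¹ *ᵥ (∑ t ∈ Finset.range k, lam t • ((P t)ᵀ *ᵥ (Y t *ᵥ δ t)))))
      ≤ lamBar * B := by
  simp only [← mem_range] at hΥle hlam hYn hY
  refine (disturbance_term_bound_general (range k) (hΥ k le_rfl)
    (fun t ht ↦ hΥ t (mem_range_le ht)) hΥle P Y δ hlam fun t ht ↦ ?_).trans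
      (mul_le_mul_of_nonneg_left hδ hlamBar.le)
  simpa only [← conjTranspose_eq_transpose_of_trivial, (hY t ht).eq] using hYn t ht
end

section
/- Fix 0 < v̲ ≤ v̄ and N ≥ 1. Let Y be a real diagonal N×N matrix each of whose diagonal entries y_n is either 0 or lies in the interval [1/v̄, 1/v̲], and let Σ be a real symmetric positive semidefinite N×N matrix. Then v̲·λ_max(Y Σ Y) ≤ Tr(Y Σ) ≤ v̄·N·λ_max(Y Σ Y), where λ_max denotes the largest eigenvalue. -/
open Matrix Finset

/-!
By cyclicity `Tr (Y Σ Y) = Tr (Y² Σ)`, and `λ_max ≤ Tr ≤ N λ_max` on positive semidefinite matrices.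
So it suffices to compare `Y` with `Y²` in the Loewner order, which is a matter of the scalar
inequalities `v̲ x² ≤ x ≤ v̄ x²` on the spectrum of `Y`, and to pair with `Σ`.
-/

section Conjugation

variable {R n : Type*} [Fintype n]

theorem mul_trace_conj [CommSemiring R] [DecidableEq n] (c : R) (Y S : Matrix n n R) :
    c * (Y * S * Y).trace = (c • Y ^ 2 * S).trace := by
  rw [trace_mul_cycle, ← sq, smul_mul_assoc, trace_smul, smul_eq_mul]

theorem posSemidef_conj_of_isHermitian [Ring R] [PartialOrder R] [StarRing R]
    {Y S : Matrix n n R} (hY : Y.IsHermitian) (hS : S.PosSemidef) : (Y * S * Y).PosSemidef := by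
  simpa only [hY.eq] using hS.mul_mul_conjTranspose_same Y

end Conjugation

section Loewner

open scoped ComplexOrder MatrixOrder

variable {𝕜 n : Type*} [RCLike 𝕜] [Fintype n]

theorem trace_mul_nonneg_of_posSemidef {A B : Matrix n n 𝕜} (hA : A.PosSemidef)
    (hB : B.PosSemidef) : 0 ≤ (A * B).trace := by
  classical
  obtain ⟨C, rfl⟩ := CStarAlgebra.nonneg_iff_eq_star_mul_self.mp hB.nonneg
  calc 0 ≤ (C * A * Cᴴ).trace := (hA.mul_mul_conjTranspose_same C).trace_nonneg
    _ = (A * (Cᴴ * C)).trace := by rw [trace_mul_cycle, trace_mul_comm]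

theorem trace_mul_le_trace_mul_of_le {A B S : Matrix n n 𝕜} (hAB : A ≤ B)
    (hS : S.PosSemidef) : (A * S).trace ≤ (B * S).trace := by
  simpa only [sub_mul, trace_sub, sub_nonneg] using
    trace_mul_nonneg_of_posSemidef (le_iff.mp hAB) hS

variable [DecidableEq n] {Y : Matrix n n 𝕜}

theorem cfc_mul_sq_eq_smul_sq (hY : Y.IsHermitian) (c : ℝ) :
    cfc (fun x : ℝ ↦ c * x ^ 2) Y = c • Y ^ 2 := by
  have hsa : IsSelfAdjoint Y := hY
  rw [cfc_const_mul .., cfc_pow_id Y 2]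

theorem smul_sq_le_self_of_spectrum {c : ℝ} (hY : Y.IsHermitian)
    (h : ∀ x ∈ spectrum ℝ Y, c * x ^ 2 ≤ x) : c • Y ^ 2 ≤ Y := by
  have hsa : IsSelfAdjoint Y := hY
  simpa only [cfc_mul_sq_eq_smul_sq hY, cfc_id' ℝ Y] using cfc_mono (a := Y) h

theorem self_le_smul_sq_of_spectrum {c : ℝ} (hY : Y.IsHermitian)
    (h : ∀ x ∈ spectrum ℝ Y, x ≤ c * x ^ 2) : Y ≤ c • Y ^ 2 := by
  have hsa : IsSelfAdjoint Y := hY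
  simpa only [cfc_mul_sq_eq_smul_sq hY, cfc_id' ℝ Y] using cfc_mono (a := Y) h

end Loewner

section LargestEigenvalue

open scoped MatrixOrder

variable {N : ℕ} {A Y S : Matrix (Fin N) (Fin N) ℝ} {c : ℝ}

theorem lambdaMax_le_trace [NeZero N] (hA : A.PosSemidef) : lambdaMax A ≤ A.trace := by
  rw [lambdaMax, hA.isHermitian.spectrum_real_eq_range_eigenvalues,
    hA.isHermitian.trace_eq_sum_eigenvalues]
  refine csSup_le (Set.range_nonempty _) (Set.forall_mem_range.mpr fun i ↦ ?_)
  exact single_le_sum (fun j _ ↦ hA.eigenvalues_nonneg j) (mem_univ i)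

theorem trace_le_mul_lambdaMax (hA : A.IsHermitian) : A.trace ≤ N * lambdaMax A := by
  have eigenvalue_le (i : Fin N) : hA.eigenvalues i ≤ lambdaMax A :=
    le_csSup A.finite_real_spectrum.bddAbove (hA.eigenvalues_mem_spectrum_real i)
  simpa [hA.trace_eq_sum_eigenvalues] using
    sum_le_card_nsmul univ _ _ fun i _ ↦ eigenvalue_le i

theorem mul_lambdaMax_conj_le_trace_mul [NeZero N] (hc : 0 ≤ c) (hY : Y.IsHermitian)
    (hS : S.PosSemidef) (h : c • Y ^ 2 ≤ Y) :
    c * lambdaMax (Y * S * Y) ≤ (Y * S).trace :=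
  calc c * lambdaMax (Y * S * Y)
      ≤ c * (Y * S * Y).trace := by
        gcongr
        exact lambdaMax_le_trace (posSemidef_conj_of_isHermitian hY hS)
    _ = (c • Y ^ 2 * S).trace := mul_trace_conj c Y S
    _ ≤ (Y * S).trace := trace_mul_le_trace_mul_of_le h hS

theorem trace_mul_le_mul_lambdaMax_conj (hc : 0 ≤ c) (hY : Y.IsHermitian)
    (hS : S.PosSemidef) (h : Y ≤ c • Y ^ 2) :
    (Y * S).trace ≤ c * N * lambdaMax (Y * S * Y) :=
  calc (Y * S).trace
      ≤ (c • Y ^ 2 * S).trace := trace_mul_le_trace_mul_of_le h hS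
    _ = c * (Y * S * Y).trace := (mul_trace_conj c Y S).symm
    _ ≤ c * (N * lambdaMax (Y * S * Y)) := by
        gcongr
        exact trace_le_mul_lambdaMax (posSemidef_conj_of_isHermitian hY hS).isHermitian
    _ = c * N * lambdaMax (Y * S * Y) := (mul_assoc ..).symm

end LargestEigenvalue

theorem mul_sq_le_self_of_le_one_div {c x : ℝ} (hc : 0 < c) (hx : 0 ≤ x) (h : x ≤ 1 / c) :
    c * x ^ 2 ≤ x := by
  have hcx : x * c ≤ 1 := (le_div_iff₀ hc).mp h
  nlinarith

theorem self_le_mul_sq_of_one_div_le {c x : ℝ} (hc : 0 < c) (h : 1 / c ≤ x) :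
    x ≤ c * x ^ 2 := by
  have hx : 0 < x := (one_div_pos.mpr hc).trans_le h
  have hcx : 1 ≤ x * c := (div_le_iff₀ hc).mp h
  nlinarith

theorem trace_YSigma_two_sided_general {N : ℕ} (hN : 1 ≤ N) {vlo vhi : ℝ}
    (hvlo : 0 < vlo) (hvhi : 0 < vhi) {Y S : Matrix (Fin N) (Fin N) ℝ} (hY : Y.IsHermitian)
    (hspec : ∀ x ∈ spectrum ℝ Y, x = 0 ∨ (1 / vhi ≤ x ∧ x ≤ 1 / vlo)) (hS : S.PosSemidef) :
    vlo * lambdaMax (Y * S * Y) ≤ (Y * S).trace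
      ∧ (Y * S).trace ≤ vhi * N * lambdaMax (Y * S * Y) := by
  have : NeZero N := NeZero.of_pos hN
  constructor
  · refine mul_lambdaMax_conj_le_trace_mul hvlo.le hY hS
      (smul_sq_le_self_of_spectrum hY fun x hx ↦ ?_)
    rcases hspec x hx with rfl | ⟨hlo, hhi⟩
    · simp
    · exact mul_sq_le_self_of_le_one_div hvlo ((one_div_pos.mpr hvhi).le.trans hlo) hhi
  · refine trace_mul_le_mul_lambdaMax_conj hvhi.le hY hS
      (self_le_smul_sq_of_spectrum hY fun x hx ↦ ?_)
    rcases hspec x hx with rfl | ⟨hlo, -⟩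
    · simp
    · exact self_le_mul_sq_of_one_div_le hvhi hlo

/-- Lemma 8 (conn), statement 2: for a diagonal `Y` whose entries are `0` or lie in
`[1/v̄, 1/v̲]`, one has `v̲·‖Y‖²_Σ ≤ Tr(YΣ) ≤ v̄·N·‖Y‖²_Σ` where `‖Y‖²_Σ = λ_max(YΣY)`. -/
theorem trace_YSigma_two_sided (N : ℕ) (hN : 1 ≤ N) (vlo vhi : ℝ)
    (hvlo : 0 < vlo) (hvv : vlo ≤ vhi)
    (yd : Fin N → ℝ) (hy : ∀ n, yd n = 0 ∨ (1 / vhi ≤ yd n ∧ yd n ≤ 1 / vlo))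
    (S : Matrix (Fin N) (Fin N) ℝ) (hS : S.PosSemidef) :
    vlo * lambdaMax (Matrix.diagonal yd * S * Matrix.diagonal yd)
        ≤ (Matrix.diagonal yd * S).trace
      ∧ (Matrix.diagonal yd * S).trace
        ≤ vhi * N * lambdaMax (Matrix.diagonal yd * S * Matrix.diagonal yd) := by
  refine trace_YSigma_two_sided_general hN hvlo (hvlo.trans_le hvv) (isHermitian_diagonal yd) ?_ hS
  simpa only [spectrum_diagonal, Set.forall_mem_range] using hy
end

section
/- Let Υ be a real symmetric positive definite N×N matrix with Υ^{-1} ⪯ (1/λ)·I for some λ > 0; let A be an invertible real N×N matrix with α̲·I ⪯ AᵀA ⪯ ᾱ·I for some 0 < α̲ ≤ ᾱ; let Σ_0 be a real symmetric positive definite N×N matrix with σ̲·I ⪯ Σ_0 for some σ̲ > 0; and let φ_0, φ ∈ ℝ^N with ‖φ_0‖ ≤ φ̄ and ‖φ‖ ≤ φ̄. Then ‖ A Υ^{-1} Σ_0^{-1} ( φ_0 − A^{-1} φ ) ‖ ≤ φ̄·sqrt(ᾱ)·(1 + 1/sqrt(α̲)) / (σ̲·λ). -/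
open Matrix Finset

/-! Every factor is bounded in the `ℓ²` operator norm. The bound for `A` comes from
`‖A x‖² = ⟨x, AᴴA x⟩`, and conjugating `α̲ ≤ AᴴA` by `A⁻¹` turns the one for `A⁻¹` into a bound of
the same kind. Those for `Υ⁻¹` and `Σ₀⁻¹` follow by writing a positive semidefinite matrix as `BᴴB`
and using `‖BᴴB‖ = ‖B‖²`. -/

section L2Operator

open scoped ComplexOrder MatrixOrder Matrix.Norms.L2Operator

variable {𝕜 m n : Type*} [RCLike 𝕜]

theorem posDef_of_le {P Q : Matrix n n 𝕜} (hP : P.PosDef) (h : P ≤ Q) : Q.PosDef := by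
  simpa only [add_sub_cancel] using hP.add_posSemidef (le_iff.mp h)

variable [Fintype m] [Fintype n]

theorem norm_toLp_mulVec_sq (A : Matrix m n 𝕜) (x : n → 𝕜) :
    ‖WithLp.toLp 2 (A *ᵥ x)‖ ^ 2 = RCLike.re (star x ⬝ᵥ (Aᴴ * A) *ᵥ x) := by
  rw [← inner_self_eq_norm_sq (𝕜 := 𝕜), EuclideanSpace.inner_toLp_toLp, dotProduct_comm,
    star_mulVec, ← dotProduct_mulVec, mulVec_mulVec]

theorem re_dotProduct_mulVec_mono {P Q : Matrix n n 𝕜} (h : P ≤ Q) (x : n → 𝕜) :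
    RCLike.re (star x ⬝ᵥ P *ᵥ x) ≤ RCLike.re (star x ⬝ᵥ Q *ᵥ x) := by
  simpa only [sub_mulVec, dotProduct_sub, map_sub, sub_nonneg] using
    (le_iff.mp h).re_dotProduct_nonneg x

variable [DecidableEq n]

theorem l2_opNorm_le_sqrt_of_conjTranspose_mul_self_le {A : Matrix m n 𝕜} {c : ℝ}
    (h : Aᴴ * A ≤ c • 1) : ‖A‖ ≤ √c := by
  refine ContinuousLinearMap.opNorm_le_bound _ (Real.sqrt_nonneg c) fun x => ?_
  have norm_sq_le : ‖WithLp.toLp 2 (A *ᵥ x.ofLp)‖ ^ 2 ≤ c * ‖x‖ ^ 2 := by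
    have hx : ‖x‖ ^ 2 = RCLike.re (star x.ofLp ⬝ᵥ x.ofLp) := by
      simpa using norm_toLp_mulVec_sq (1 : Matrix n n 𝕜) x.ofLp
    have hle := re_dotProduct_mulVec_mono h x.ofLp
    rwa [← norm_toLp_mulVec_sq, smul_mulVec, one_mulVec, dotProduct_smul, RCLike.smul_re,
      ← hx] at hle
  calc ‖WithLp.toLp 2 (A *ᵥ x.ofLp)‖ ≤ √(c * ‖x‖ ^ 2) := Real.le_sqrt_of_sq_le norm_sq_le
    _ = √c * ‖x‖ := by rw [Real.sqrt_mul' c (sq_nonneg _), Real.sqrt_sq (norm_nonneg x)]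

theorem l2_opNorm_le_of_nonneg_of_le_smul_one {P : Matrix n n 𝕜} {c : ℝ} (hc : 0 ≤ c)
    (hP : 0 ≤ P) (h : P ≤ c • 1) : ‖P‖ ≤ c := by
  obtain ⟨B, rfl⟩ := CStarAlgebra.nonneg_iff_eq_star_mul_self.mp hP
  have hB : ‖B‖ ≤ √c := l2_opNorm_le_sqrt_of_conjTranspose_mul_self_le h
  calc ‖star B * B‖ = ‖B‖ * ‖B‖ := CStarRing.norm_star_mul_self
    _ ≤ √c * √c := by gcongr
    _ = c := Real.mul_self_sqrt hc

theorem l2_opNorm_inv_le_of_smul_one_le_conjTranspose_mul_self {A : Matrix n n 𝕜} {c : ℝ}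
    (hc : 0 < c) (h : c • 1 ≤ Aᴴ * A) : ‖A⁻¹‖ ≤ 1 / √c := by
  have hA : IsUnit A := isUnit_of_mul_isUnit_right (posDef_of_le (PosDef.one.smul hc) h).isUnit
  have hAA : A * A⁻¹ = 1 := mul_nonsing_inv A ((isUnit_iff_isUnit_det A).mp hA)
  have conj_le : c • (A⁻¹ᴴ * A⁻¹) ≤ 1 :=
    calc c • (A⁻¹ᴴ * A⁻¹) = A⁻¹ᴴ * (c • 1) * A⁻¹ := by
          rw [mul_smul_comm, mul_one, smul_mul_assoc]
      _ ≤ A⁻¹ᴴ * (Aᴴ * A) * A⁻¹ := star_left_conjugate_le_conjugate h A⁻¹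
      _ = (A * A⁻¹)ᴴ * (A * A⁻¹) := by simp only [conjTranspose_mul, mul_assoc]
      _ = 1 := by rw [hAA, conjTranspose_one, one_mul]
  have gram_le : A⁻¹ᴴ * A⁻¹ ≤ c⁻¹ • 1 := by
    simpa only [inv_smul_smul₀ hc.ne'] using
      smul_le_smul_of_nonneg_left conj_le (inv_nonneg.mpr hc.le)
  simpa only [Real.sqrt_inv, one_div] using l2_opNorm_le_sqrt_of_conjTranspose_mul_self_le gram_le

theorem l2_opNorm_inv_le_of_smul_one_le {S : Matrix n n 𝕜} {c : ℝ} (hc : 0 < c)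
    (h : c • 1 ≤ S) : ‖S⁻¹‖ ≤ 1 / c := by
  obtain ⟨B, rfl⟩ := CStarAlgebra.nonneg_iff_eq_star_mul_self.mp
    (posDef_of_le (PosDef.one.smul hc) h).posSemidef.nonneg
  have hB : ‖B⁻¹‖ ≤ 1 / √c := l2_opNorm_inv_le_of_smul_one_le_conjTranspose_mul_self hc h
  calc ‖(star B * B)⁻¹‖ = ‖B⁻¹ * star B⁻¹‖ := by
        simp only [Matrix.mul_inv_rev, star_eq_conjTranspose, conjTranspose_nonsing_inv]
    _ = ‖B⁻¹‖ * ‖B⁻¹‖ := CStarRing.norm_self_mul_star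
    _ ≤ 1 / √c * (1 / √c) := by gcongr
    _ = 1 / c := by rw [div_mul_div_comm, one_mul, Real.mul_self_sqrt hc.le]

theorem term_I_bound_general {Υ A S0 : Matrix n n 𝕜} {lam αlo αbar σlo φbar : ℝ}
    (hΥ : Υ.PosDef) (hlam : 0 < lam) (hΥle : Υ⁻¹ ≤ (1 / lam) • 1)
    (hαlo : 0 < αlo) (hAlo : αlo • 1 ≤ Aᴴ * A) (hAhi : Aᴴ * A ≤ αbar • 1)
    (hσlo : 0 < σlo) (hS0lo : σlo • 1 ≤ S0)
    {φ0 φ : n → 𝕜} (hφ0 : ‖WithLp.toLp 2 φ0‖ ≤ φbar) (hφ : ‖WithLp.toLp 2 φ‖ ≤ φbar) :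
    ‖WithLp.toLp 2 ((A * Υ⁻¹ * S0⁻¹) *ᵥ (φ0 - A⁻¹ *ᵥ φ))‖
      ≤ φbar * √αbar * (1 + 1 / √αlo) / (σlo * lam) := by
  have hΥinv : ‖Υ⁻¹‖ ≤ 1 / lam :=
    l2_opNorm_le_of_nonneg_of_le_smul_one (one_div_pos.mpr hlam).le hΥ.inv.posSemidef.nonneg
      hΥle
  have matrix_le : ‖A * Υ⁻¹ * S0⁻¹‖ ≤ √αbar * (1 / lam) * (1 / σlo) :=
    norm_mul_le_of_le
      (norm_mul_le_of_le (l2_opNorm_le_sqrt_of_conjTranspose_mul_self_le hAhi) hΥinv)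
      (l2_opNorm_inv_le_of_smul_one_le hσlo hS0lo)
  have pullback_le : ‖WithLp.toLp 2 (A⁻¹ *ᵥ φ)‖ ≤ 1 / √αlo * φbar :=
    (l2_opNorm_mulVec A⁻¹ (WithLp.toLp 2 φ)).trans <|
      mul_le_mul (l2_opNorm_inv_le_of_smul_one_le_conjTranspose_mul_self hαlo hAlo) hφ
        (norm_nonneg _) (by positivity)
  have vector_le : ‖WithLp.toLp 2 (φ0 - A⁻¹ *ᵥ φ)‖ ≤ φbar + 1 / √αlo * φbar :=
    WithLp.toLp_sub 2 φ0 (A⁻¹ *ᵥ φ) ▸ norm_sub_le_of_le hφ0 pullback_le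
  calc ‖WithLp.toLp 2 ((A * Υ⁻¹ * S0⁻¹) *ᵥ (φ0 - A⁻¹ *ᵥ φ))‖
      ≤ ‖A * Υ⁻¹ * S0⁻¹‖ * ‖WithLp.toLp 2 (φ0 - A⁻¹ *ᵥ φ)‖ :=
        l2_opNorm_mulVec _ (WithLp.toLp 2 _)
    _ ≤ √αbar * (1 / lam) * (1 / σlo) * (φbar + 1 / √αlo * φbar) :=
        mul_le_mul matrix_le vector_le (norm_nonneg _) (by positivity)
    _ = φbar * √αbar * (1 + 1 / √αlo) / (σlo * lam) := by ring

end L2Operator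

theorem sqrt_dotProduct_self_eq_norm_toLp {n : Type*} [Fintype n] (v : n → ℝ) :
    √(v ⬝ᵥ v) = ‖WithLp.toLp 2 v‖ := by
  simp only [EuclideanSpace.norm_eq, dotProduct, Real.norm_eq_abs, sq_abs, ← sq]

/-- The bound on Term I ('IneqDisturbI') in the proof of Lemma 10 (discrepancy):
`‖A Υ⁻¹ Σ₀⁻¹ (φ₀ − A⁻¹ φ)‖ ≤ φ̄·√ᾱ·(1 + 1/√α̲)/(σ̲·λ)`. -/
theorem term_I_bound (N : ℕ) (Υ A S0 : Matrix (Fin N) (Fin N) ℝ)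
    (lam αlo αbar σlo φbar : ℝ)
    (hΥ : Υ.PosDef) (hlam : 0 < lam)
    (hΥle : ((1 / lam) • (1 : Matrix (Fin N) (Fin N) ℝ) - Υ⁻¹).PosSemidef)
    (hA : IsUnit A) (hαlo : 0 < αlo) (hαα : αlo ≤ αbar)
    (hAlo : (Aᵀ * A - αlo • 1).PosSemidef) (hAhi : (αbar • 1 - Aᵀ * A).PosSemidef)
    (hS0 : S0.PosDef) (hσlo : 0 < σlo) (hS0lo : (S0 - σlo • 1).PosSemidef)
    (φ0 φ : Fin N → ℝ)
    (hφ0 : Real.sqrt (φ0 ⬝ᵥ φ0) ≤ φbar) (hφ : Real.sqrt (φ ⬝ᵥ φ) ≤ φbar) :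
    Real.sqrt ((((A * Υ⁻¹ * S0⁻¹) *ᵥ (φ0 - A⁻¹ *ᵥ φ))
        ⬝ᵥ ((A * Υ⁻¹ * S0⁻¹) *ᵥ (φ0 - A⁻¹ *ᵥ φ))))
      ≤ φbar * Real.sqrt αbar * (1 + 1 / Real.sqrt αlo) / (σlo * lam) := by
  simp only [← conjTranspose_eq_transpose_of_trivial, sqrt_dotProduct_self_eq_norm_toLp, ← le_iff]
    at hΥle hAlo hAhi hS0lo hφ0 hφ ⊢
  exact term_I_bound_general hΥ hlam hΥle hαlo hAlo hAhi hσlo hS0lo hφ0 hφ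
end

section
/- Fix N ≥ 1, 1 ≤ I ≤ N, and β ≥ 0. Let Σ be a real symmetric positive definite N×N matrix with diagonal entries σ_1, …, σ_N > 0, let φ, φ̂ ∈ ℝ^N satisfy max_{1≤n≤N} |φ̂_n − φ_n| / sqrt(σ_n) ≤ β, and define the D-UCB vector μ ∈ ℝ^N by μ_n := φ̂_n + β·sqrt(σ_n). Let 𝒜 := { a ∈ {0,1}^N : Σ_{n=1}^N a_n = I }, and let a ∈ 𝒜 maximize the inner product ⟨a, μ⟩ over 𝒜. Then for every a* ∈ 𝒜: ⟨a*, φ⟩ − ⟨a, φ⟩ ≤ 2·sqrt(N)·β · sqrt( Σ_{n=1}^N σ_n·a_n² ). -/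
/-!
Write `r n = β √σ n` for the confidence radius. Since `φ ≤ μ ≤ φ + 2 r` coordinatewise and actions
are nonnegative, optimism gives `⟨a*, φ⟩ ≤ ⟨a*, μ⟩ ≤ ⟨a, μ⟩ ≤ ⟨a, φ⟩ + 2 ⟨a, r⟩`, so the regret is
at most twice the radius accumulated along the chosen action. Cauchy–Schwarz against the constant
vector turns `∑ n, a n * √σ n` into the weighted ℓ²-norm of `a`, at the price of a factor `√N`.
-/

open Matrix Finset

theorem dotProduct_sub_le_two_mul_dotProduct_of_abs_sub_le {ι R : Type*} [Fintype ι] [Ring R]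
    [LinearOrder R] [IsOrderedRing R] {φ φhat r a b : ι → R}
    (hr : ∀ n, |φhat n - φ n| ≤ r n) (ha : 0 ≤ a) (hb : 0 ≤ b)
    (hba : b ⬝ᵥ (φhat + r) ≤ a ⬝ᵥ (φhat + r)) :
    b ⬝ᵥ φ - a ⬝ᵥ φ ≤ 2 * (a ⬝ᵥ r) := by
  have optimism : φ ≤ φhat + r := fun n => by
    simpa [add_comm] using sub_le_iff_le_add.mp (abs_sub_le_iff.mp (hr n)).2
  have estimate_le : φhat ≤ φ + r := fun n => by
    simpa [add_comm] using sub_le_iff_le_add.mp (abs_sub_le_iff.mp (hr n)).1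
  rw [sub_le_iff_le_add']
  calc
    b ⬝ᵥ φ ≤ b ⬝ᵥ (φhat + r) := dotProduct_le_dotProduct_of_nonneg_left optimism hb
    _ ≤ a ⬝ᵥ (φhat + r) := hba
    _ ≤ a ⬝ᵥ (φ + r + r) :=
      dotProduct_le_dotProduct_of_nonneg_left (add_le_add_left estimate_le r) ha
    _ = a ⬝ᵥ φ + 2 * (a ⬝ᵥ r) := by rw [dotProduct_add, dotProduct_add, add_assoc, two_mul]

theorem sum_mul_sqrt_le_sqrt_card_mul_sqrt_sum_mul_sq {ι : Type*} (s : Finset ι) {σ : ι → ℝ}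
    (hσ : ∀ n ∈ s, 0 ≤ σ n) (a : ι → ℝ) :
    ∑ n ∈ s, a n * √(σ n) ≤ √(#s) * √(∑ n ∈ s, σ n * a n ^ 2) := by
  have sq_eq : ∑ n ∈ s, (a n * √(σ n)) ^ 2 = ∑ n ∈ s, σ n * a n ^ 2 :=
    sum_congr rfl fun n hn => by rw [mul_pow, Real.sq_sqrt (hσ n hn), mul_comm]
  simpa [sq_eq] using Real.sum_mul_le_sqrt_mul_sqrt s (fun _ => 1) fun n => a n * √(σ n)

theorem DUCB_regret_upper_bound_general {ι : Type*} [Fintype ι] {β : ℝ} (hβ : 0 ≤ β)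
    {σ : ι → ℝ} (hσ : ∀ n, 0 ≤ σ n) {φ φhat μ : ι → ℝ}
    (herr : ∀ n, |φhat n - φ n| ≤ β * √(σ n)) (hμ : ∀ n, μ n = φhat n + β * √(σ n))
    {A : Set (ι → ℝ)} (hA : ∀ b ∈ A, 0 ≤ b) {a : ι → ℝ} (ha : a ∈ A)
    (hmax : IsMaxOn (· ⬝ᵥ μ) A a) {astar : ι → ℝ} (hastar : astar ∈ A) :
    astar ⬝ᵥ φ - a ⬝ᵥ φ ≤ 2 * √(Fintype.card ι) * β * √(∑ n, σ n * a n ^ 2) := by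
  obtain rfl : μ = φhat + fun n => β * √(σ n) := funext hμ
  calc
    astar ⬝ᵥ φ - a ⬝ᵥ φ ≤ 2 * (a ⬝ᵥ fun n => β * √(σ n)) :=
      dotProduct_sub_le_two_mul_dotProduct_of_abs_sub_le herr (hA a ha) (hA astar hastar)
        (hmax hastar)
    _ = 2 * (β * ∑ n, a n * √(σ n)) := by simp only [dotProduct, mul_sum, mul_left_comm]
    _ ≤ 2 * (β * (√(Fintype.card ι) * √(∑ n, σ n * a n ^ 2))) := by
      gcongr
      exact sum_mul_sqrt_le_sqrt_card_mul_sqrt_sum_mul_sq univ (fun n _ => hσ n) a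
    _ = 2 * √(Fintype.card ι) * β * √(∑ n, σ n * a n ^ 2) := by ring

/-- The deterministic content of Lemma 6 (regretUpperBound): on the confidence event
where the estimation error is bounded by `β` in the weighted ℓ∞-norm with weights
`(σ_n)^{-1/2}`, the instantaneous regret of the D-UCB action `a` is at most
`2√N·β·‖a‖_{D_Σ}`. -/
theorem DUCB_regret_upper_bound (N I : ℕ) (hN : 1 ≤ N) (hI1 : 1 ≤ I) (hIN : I ≤ N)
    (β : ℝ) (hβ : 0 ≤ β)
    (S : Matrix (Fin N) (Fin N) ℝ) (hS : S.PosDef)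
    (φ φhat : Fin N → ℝ)
    (herr : ∀ n, |φhat n - φ n| / Real.sqrt (S n n) ≤ β)
    (μ : Fin N → ℝ) (hμ : ∀ n, μ n = φhat n + β * Real.sqrt (S n n))
    (a : Fin N → ℝ)
    (ha01 : ∀ n, a n = 0 ∨ a n = 1) (haI : ∑ n, a n = I)
    (hamax : ∀ b : Fin N → ℝ, (∀ n, b n = 0 ∨ b n = 1) → (∑ n, b n = I) →
      ∑ n, b n * μ n ≤ ∑ n, a n * μ n) :
    ∀ astar : Fin N → ℝ, (∀ n, astar n = 0 ∨ astar n = 1) → (∑ n, astar n = I) →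
      (∑ n, astar n * φ n) - (∑ n, a n * φ n)
        ≤ 2 * Real.sqrt N * β * Real.sqrt (∑ n, S n n * (a n) ^ 2) := by
  intro astar hastar01 hastarI
  have radius (n : Fin N) : |φhat n - φ n| ≤ β * √(S n n) :=
    (div_le_iff₀ (Real.sqrt_pos.mpr hS.diag_pos)).mp (herr n)
  have nonneg (b : Fin N → ℝ) (hb : (∀ n, b n = 0 ∨ b n = 1) ∧ ∑ n, b n = I) : 0 ≤ b :=
    fun n => by rcases hb.1 n with h | h <;> simp [h]
  simpa only [Fintype.card_fin, dotProduct] using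
    DUCB_regret_upper_bound_general hβ (fun _ => hS.diag_pos.le) radius hμ nonneg ⟨ha01, haI⟩
      (fun b hb => hamax b hb.1 hb.2) ⟨hastar01, hastarI⟩
end
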